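/- If a union ultrafilter u on F is stable, then it has the Ramsey property for pairs: for every partition F²_< = A₀ ∪ A₁ there exists A ∈ u such that A²_< ⊆ A₀ or A²_< ⊆ A₁. -/

import Mathlib

open Finset

/-- `FU t` : the set of finite unions of an infinite sequence `t` in `F`. -/
def FU (t : ℕ → Finset ℕ) : Set (Finset ℕ) :=
  {x | ∃ v : Finset ℕ, v.Nonempty ∧ x = v.biUnion t}

/-- a sequence of nonempty pairwise disjoint finite sets. -/
def IsDisjointSeq (t : ℕ → Finset ℕ) : Prop :=
  (∀ i, (t i).Nonempty) ∧ Pairwise (Function.onFun Disjoint t)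

/-- `ordLT s t` : `max s < min t`, i.e. every element of `s` is below every element of `t`. -/
def ordLT (s t : Finset ℕ) : Prop := ∀ a ∈ s, ∀ b ∈ t, a < b

/-- `t` is an almost condensation of `s`: the FU-set of some tail of `t` is inside `FU s`. -/
def AlmostCond (t s : ℕ → Finset ℕ) : Prop :=
  ∃ m, FU (fun n => t (n + m)) ⊆ FU s

/-- a union ultrafilter: an ultrafilter on `F` with a base of FU-sets of disjoint sequences. -/
def IsUnionUltrafilter (u : Ultrafilter (Finset ℕ)) : Prop :=
  ∀ A ∈ u, ∃ t, IsDisjointSeq t ∧ FU t ∈ u ∧ FU t ⊆ A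

/-- stability: countably many FU-sets in `u` admit a common almost condensation in `u`. -/
def IsStable (u : Ultrafilter (Finset ℕ)) : Prop :=
  ∀ s : ℕ → ℕ → Finset ℕ, (∀ α, IsDisjointSeq (s α)) → (∀ α, FU (s α) ∈ u) →
    ∃ t, IsDisjointSeq t ∧ FU t ∈ u ∧ ∀ α, AlmostCond t (s α)

/-- the Ramsey property for pairs: every finite partition of the ordered pairs `F²_<`
has a homogeneous set of the form `A²_<` with `A ∈ u`. -/
def RamseyPairs (u : Ultrafilter (Finset ℕ)) : Prop :=
  ∀ n : ℕ, ∀ c : Finset ℕ × Finset ℕ → Fin (n + 1),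
    ∃ A ∈ u, ∃ i, ∀ v ∈ A, ∀ w ∈ A, ordLT v w → c (v, w) = i

/-!
Call the gap after a non-maximal `a ∈ v` short if the next element of `v` is below `g a`. For
`v < w` the number of short gaps of `v ∪ w` is the sum of those of `v` and `w`, plus one exactly
when the gap between `v` and `w` is short. The ultrafilter `u` decides the parity of this number.
It cannot be odd: an FU-set in `u` is closed under unions and contains some `v < w` with a long
gap between them, where the two odd numbers add up to an even one. If it is even on an FU-set, then
no gap between two members `v < w` is short. Hence `u` contains sets in which `g (max v) ≤ min w`
for all `v < w`.

Stability yields one sequence with tails whose FU-sets lie in countably many prescribed sets of `u`.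
Choosing `g` so that `g (max v) ≤ min w` forces `w` into the tail belonging to `v`, one obtains
diagonal intersections in `u` along `<`, so a relation that holds for `u`-almost all `v` and,
given `v`, for `u`-almost all `w` holds for all `v < w` in some set of `u`.
-/

lemma union_mem_FU {t : ℕ → Finset ℕ} {x y : Finset ℕ} (hx : x ∈ FU t) (hy : y ∈ FU t) :
    x ∪ y ∈ FU t := by
  obtain ⟨a, ha, rfl⟩ := hx
  obtain ⟨b, -, rfl⟩ := hy
  exact ⟨a ∪ b, ha.mono subset_union_left, union_biUnion.symm⟩

lemma apply_mem_FU (t : ℕ → Finset ℕ) (i : ℕ) : t i ∈ FU t :=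
  ⟨{i}, singleton_nonempty i, singleton_biUnion.symm⟩

lemma nonempty_of_mem_FU {t : ℕ → Finset ℕ} (ht : ∀ i, (t i).Nonempty) {x : Finset ℕ}
    (hx : x ∈ FU t) : x.Nonempty := by
  obtain ⟨a, ha, rfl⟩ := hx
  exact ha.biUnion fun i _ => ht i

lemma mem_FU_tail {t : ℕ → Finset ℕ} (ht : ∀ i, (t i).Nonempty) {k : ℕ} {x : Finset ℕ}
    (hx : x ∈ FU t) (hdisj : ∀ i < k, Disjoint (t i) x) : x ∈ FU fun n => t (n + k) := by
  obtain ⟨a, ha, rfl⟩ := hx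
  have hka : ∀ i ∈ a, k ≤ i := by
    intro i hi
    by_contra! hik
    obtain ⟨z, hz⟩ := ht i
    exact disjoint_left.1 (hdisj i hik) hz (mem_biUnion.2 ⟨i, hi, hz⟩)
  refine ⟨a.image (· - k), ha.image _, ?_⟩
  rw [image_biUnion]
  exact biUnion_congr rfl fun i hi => by rw [Nat.sub_add_cancel (hka i hi)]

lemma exists_forall_le_of_pairwise_disjoint {t : ℕ → Finset ℕ}
    (ht : Pairwise (Function.onFun Disjoint t)) (n : ℕ) : ∃ i, ∀ b ∈ t i, n ≤ b := by
  by_contra! h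
  choose f hf hfn using h
  refine not_injective_infinite_finite (fun i => (⟨f i, hfn i⟩ : Fin n)) fun i j hij => ?_
  have hfij : f i = f j := congrArg Fin.val hij
  by_contra hne
  exact disjoint_left.1 (ht hne) (hf i) (hfij ▸ hf j)

lemma ordLT.disjoint {v w : Finset ℕ} (hvw : ordLT v w) : Disjoint v w :=
  disjoint_left.2 fun a hav haw => (hvw a hav a haw).false

/-- The elements of `v` followed by a short gap: `a` is not the last element of `v`, and the next
one is below `g a`. The witness `b` need not be the next element, since the next one is at most
`b`. -/
def shortGaps (g : ℕ → ℕ) (v : Finset ℕ) : Finset ℕ :=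
  v.filter fun a => ∃ b ∈ v, a < b ∧ b < g a

section ShortGaps

variable {g : ℕ → ℕ} {v w : Finset ℕ} {m : ℕ}

lemma mem_shortGaps {a : ℕ} : a ∈ shortGaps g v ↔ a ∈ v ∧ ∃ b ∈ v, a < b ∧ b < g a :=
  mem_filter

lemma disjoint_shortGaps (g : ℕ → ℕ) (hvw : ordLT v w) :
    Disjoint (shortGaps g v) (shortGaps g w) :=
  disjoint_filter_filter hvw.disjoint

lemma notMem_shortGaps_of_isGreatest (g : ℕ → ℕ) (hm : IsGreatest (v : Set ℕ) m) :
    m ∉ shortGaps g v := by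
  rw [mem_shortGaps]
  rintro ⟨-, b, hb, hmb, -⟩
  exact hmb.not_ge (hm.2 hb)

lemma mem_shortGaps_union (hvw : ordLT v w) (hm : IsGreatest (v : Set ℕ) m) {a : ℕ} :
    a ∈ shortGaps g (v ∪ w) ↔
      a ∈ shortGaps g v ∪ shortGaps g w ∨ a = m ∧ ∃ b ∈ w, b < g m := by
  simp only [mem_union, mem_shortGaps]
  constructor
  · rintro ⟨hav | haw, b, hbv | hbw, hab, hbg⟩
    · exact .inl (.inl ⟨hav, b, hbv, hab, hbg⟩)
    · obtain rfl | ham := (hm.2 hav).eq_or_lt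
      · exact .inr ⟨rfl, b, hbw, hbg⟩
      · exact .inl (.inl ⟨hav, m, hm.1, ham, (hvw m hm.1 b hbw).trans hbg⟩)
    · exact absurd (hvw b hbv a haw) hab.asymm
    · exact .inl (.inr ⟨haw, b, hbw, hab, hbg⟩)
  · rintro ((⟨hav, b, hbv, hb⟩ | ⟨haw, b, hbw, hb⟩) | ⟨rfl, b, hbw, hbg⟩)
    · exact ⟨.inl hav, b, .inl hbv, hb⟩
    · exact ⟨.inr haw, b, .inr hbw, hb⟩
    · exact ⟨.inl hm.1, b, .inr hbw, hvw a hm.1 b hbw, hbg⟩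

lemma card_shortGaps_union_of_forall_le (hvw : ordLT v w) (hm : IsGreatest (v : Set ℕ) m)
    (hlong : ∀ b ∈ w, g m ≤ b) :
    (shortGaps g (v ∪ w)).card = (shortGaps g v).card + (shortGaps g w).card := by
  have hunion : shortGaps g (v ∪ w) = shortGaps g v ∪ shortGaps g w := by
    ext a
    rw [mem_shortGaps_union hvw hm, or_iff_left]
    rintro ⟨-, b, hb, hbg⟩
    exact hbg.not_ge (hlong b hb)
  rw [hunion, card_union_of_disjoint (disjoint_shortGaps g hvw)]

lemma card_shortGaps_union_of_exists_lt (hvw : ordLT v w) (hm : IsGreatest (v : Set ℕ) m)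
    (hshort : ∃ b ∈ w, b < g m) :
    (shortGaps g (v ∪ w)).card = (shortGaps g v).card + (shortGaps g w).card + 1 := by
  have hunion : shortGaps g (v ∪ w) = insert m (shortGaps g v ∪ shortGaps g w) := by
    ext a
    rw [mem_shortGaps_union hvw hm, and_iff_left hshort, mem_insert, or_comm]
  have hm_notMem : m ∉ shortGaps g v ∪ shortGaps g w :=
    notMem_union.2 ⟨notMem_shortGaps_of_isGreatest g hm,
      fun h => disjoint_left.1 hvw.disjoint hm.1 (mem_shortGaps.1 h).1⟩
  rw [hunion, card_insert_of_notMem hm_notMem,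
    card_union_of_disjoint (disjoint_shortGaps g hvw)]

end ShortGaps

namespace IsUnionUltrafilter

variable {u : Ultrafilter (Finset ℕ)}

lemma eventually_nonempty (hu : IsUnionUltrafilter u) : ∀ᶠ v : Finset ℕ in u, v.Nonempty := by
  obtain ⟨t, ht, htu, -⟩ := hu Set.univ Filter.univ_mem
  filter_upwards [htu] with v hv using nonempty_of_mem_FU ht.1 hv

lemma eventually_forall_le (hu : IsUnionUltrafilter u) (n : ℕ) :
    ∀ᶠ w : Finset ℕ in u, ∀ b ∈ w, n ≤ b := by
  by_contra h
  obtain ⟨t, ht, -, hsub⟩ := hu _ (Ultrafilter.eventually_not.2 h)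
  obtain ⟨i, hi⟩ := exists_forall_le_of_pairwise_disjoint ht.2 n
  exact hsub (apply_mem_FU t i) hi

lemma eventually_ordLT (hu : IsUnionUltrafilter u) (v : Finset ℕ) : ∀ᶠ w in u, ordLT v w := by
  filter_upwards [hu.eventually_forall_le (v.sup id + 1)] with w hw a ha b hb
  exact (Nat.lt_succ_of_le (le_sup (f := id) ha)).trans_le (hw b hb)

lemma eventually_even_card_shortGaps (hu : IsUnionUltrafilter u) (g : ℕ → ℕ) :
    ∀ᶠ v in u, Even (shortGaps g v).card := by
  by_contra h
  obtain ⟨t, ht, htu, hodd⟩ := hu _ (Ultrafilter.eventually_not.2 h)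
  obtain ⟨v, hv⟩ := u.nonempty_of_mem htu
  have hm := v.isGreatest_max' (nonempty_of_mem_FU ht.1 hv)
  have hw_mem : ∀ᶠ w in u, w ∈ FU t := htu
  obtain ⟨w, hw, hvw, hlong⟩ :=
    (hw_mem.and ((hu.eventually_ordLT v).and (hu.eventually_forall_le (g (v.max' _))))).exists
  have hcard := card_shortGaps_union_of_forall_le hvw hm hlong
  have hv_odd := Nat.not_even_iff_odd.1 (hodd hv)
  have hw_odd := Nat.not_even_iff_odd.1 (hodd hw)
  exact hodd (union_mem_FU hv hw) (hcard ▸ hv_odd.add_odd hw_odd)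

lemma exists_mem_forall_ordLT_le (hu : IsUnionUltrafilter u) (g : ℕ → ℕ) :
    ∃ A ∈ u, ∀ v ∈ A, ∀ w ∈ A, ordLT v w →
      ∀ m, IsGreatest (v : Set ℕ) m → ∀ b ∈ w, g m ≤ b := by
  obtain ⟨t, -, htu, heven⟩ := hu _ (hu.eventually_even_card_shortGaps g)
  refine ⟨FU t, htu, fun v hv w hw hvw m hm => ?_⟩
  by_contra! hshort
  have hcard := card_shortGaps_union_of_exists_lt hvw hm hshort
  have hunion : Even (shortGaps g (v ∪ w)).card := heven (union_mem_FU hv hw)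
  rw [hcard] at hunion
  exact Nat.not_even_iff_odd.2 ((heven hv).add (heven hw)).add_one hunion

lemma exists_forall_FU_tail_subset (hu : IsUnionUltrafilter u) (hs : IsStable u)
    {B : ℕ → Set (Finset ℕ)} (hB : ∀ n, B n ∈ u) :
    ∃ t, IsDisjointSeq t ∧ FU t ∈ u ∧ ∀ n, ∃ k, FU (fun i => t (i + k)) ⊆ B n := by
  choose s hs_disj hs_mem hs_sub using fun n => hu (B n) (hB n)
  obtain ⟨t, ht, htu, hcond⟩ := hs s hs_disj hs_mem
  exact ⟨t, ht, htu, fun n => (hcond n).imp fun _ hk => hk.trans (hs_sub n)⟩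

lemma exists_mem_forall_isGreatest_mem (hu : IsUnionUltrafilter u) (hs : IsStable u)
    {B : ℕ → Set (Finset ℕ)} (hB : ∀ n, B n ∈ u) :
    ∃ A ∈ u, ∀ v ∈ A, ∀ w ∈ A, ordLT v w → ∀ m, IsGreatest (v : Set ℕ) m → w ∈ B m := by
  obtain ⟨t, ht, htu, htail⟩ := hu.exists_forall_FU_tail_subset hs hB
  choose k hk using htail
  let bound (m : ℕ) : ℕ := ((range (k m)).biUnion t).sup id + 1
  have lt_bound : ∀ m, ∀ i < k m, ∀ z ∈ t i, z < bound m := fun m i hi z hz =>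
    Nat.lt_succ_of_le (le_sup (f := id) (mem_biUnion.2 ⟨i, mem_range.2 hi, hz⟩))
  obtain ⟨A, hA, hsep⟩ := hu.exists_mem_forall_ordLT_le bound
  refine ⟨A ∩ FU t, Filter.inter_mem hA htu, ?_⟩
  rintro v ⟨hvA, -⟩ w ⟨hwA, hwt⟩ hvw m hm
  refine hk m (mem_FU_tail ht.1 hwt fun i hi => disjoint_left.2 fun z hzt hzw => ?_)
  exact (lt_bound m i hi z hzt).not_ge (hsep v hvA w hwA hvw m hm z hzw)

lemma exists_mem_forall_ordLT_mem (hu : IsUnionUltrafilter u) (hs : IsStable u)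
    {B : Finset ℕ → Set (Finset ℕ)} (hB : ∀ v, B v ∈ u) :
    ∃ A ∈ u, ∀ v ∈ A, ∀ w ∈ A, ordLT v w → w ∈ B v := by
  have hB_inter : ∀ m : ℕ, ⋂ v ∈ (Iic m).powerset, B v ∈ u := fun m =>
    (Filter.biInter_finset_mem _).2 fun v _ => hB v
  obtain ⟨A, hA, hdiag⟩ := hu.exists_mem_forall_isGreatest_mem hs hB_inter
  refine ⟨A ∩ {v | v.Nonempty}, Filter.inter_mem hA hu.eventually_nonempty, ?_⟩
  rintro v ⟨hvA, hv⟩ w ⟨hwA, -⟩ hvw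
  have hv_sub : v ∈ (Iic (v.max' hv)).powerset :=
    mem_powerset.2 fun a ha => mem_Iic.2 (v.le_max' a ha)
  exact Set.mem_iInter₂.1 (hdiag v hvA w hwA hvw _ (v.isGreatest_max' hv)) v hv_sub

lemma exists_mem_forall_ordLT_of_eventually (hu : IsUnionUltrafilter u) (hs : IsStable u)
    {R : Finset ℕ → Finset ℕ → Prop} (hR : ∀ᶠ v in u, ∀ᶠ w in u, R v w) :
    ∃ A ∈ u, ∀ v ∈ A, ∀ w ∈ A, ordLT v w → R v w := by
  have hB : ∀ v, {w | (∀ᶠ w' in u, R v w') → R v w} ∈ u := fun v =>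
    Filter.eventually_imp_distrib_left.2 id
  obtain ⟨A, hA, hdiag⟩ := hu.exists_mem_forall_ordLT_mem hs hB
  refine ⟨A ∩ {v | ∀ᶠ w in u, R v w}, Filter.inter_mem hA hR, ?_⟩
  rintro v ⟨hvA, hv⟩ w ⟨hwA, -⟩ hvw
  exact hdiag v hvA w hwA hvw hv

end IsUnionUltrafilter

/-- A stable union ultrafilter has the Ramsey property for pairs: for every partition
`F²_< = A₀ ∪ A₁` there is `A ∈ u` with `A²_< ⊆ A₀` or `A²_< ⊆ A₁`. -/
theorem stable_implies_ramsey_pairs (u : Ultrafilter (Finset ℕ))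
    (hu : IsUnionUltrafilter u) (hs : IsStable u)
    (A₀ A₁ : Set (Finset ℕ × Finset ℕ))
    (hcover : ∀ p : Finset ℕ × Finset ℕ, ordLT p.1 p.2 → p ∈ A₀ ∪ A₁) :
    ∃ A ∈ u, (∀ v ∈ A, ∀ w ∈ A, ordLT v w → (v, w) ∈ A₀) ∨
      (∀ v ∈ A, ∀ w ∈ A, ordLT v w → (v, w) ∈ A₁) := by
  by_cases h₀ : ∀ᶠ v in u, ∀ᶠ w in u, (v, w) ∈ A₀
  · obtain ⟨A, hA, hA₀⟩ := hu.exists_mem_forall_ordLT_of_eventually hs h₀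
    exact ⟨A, hA, Or.inl hA₀⟩
  · have h₁ : ∀ᶠ v in u, ∀ᶠ w in u, (v, w) ∈ A₁ := by
      filter_upwards [Ultrafilter.eventually_not.2 h₀] with v hv
      filter_upwards [Ultrafilter.eventually_not.2 hv, hu.eventually_ordLT v] with w hw hvw
      exact (hcover (v, w) hvw).resolve_left hw
    obtain ⟨A, hA, hA₁⟩ := hu.exists_mem_forall_ordLT_of_eventually hs h₁
    exact ⟨A, hA, Or.inr hA₁⟩
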